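/- Suppose t_i = 1 for each i = 1,…,n−2 and that s_1,…,s_{n−2} are algebraically independent over ℂ. Let (μ_1,…,μ_{n−2}) ∈ ℂ^{n−2} be such that P = (s_1 − μ_1)A + ⋯ + (s_{n−2} − μ_{n−2})A is a prime ideal of A. Then P is a Poisson prime ideal. Moreover, the affine variety X = {p ∈ ℂⁿ : s_i(p) = μ_i for i = 1,…,n−2} is nonsingular — i.e., for every p ∈ X the (n−2)×n Jacobian matrix whose (i,j) entry is (∂s_i/∂x_j)(p) has rank n−2 — if and only if the Poisson algebra A/P (with the induced bracket) is Poisson simple, i.e. the only Poisson ideals of A/P are 0 and A/P. -/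

import Mathlib

/- STATEMENT 19: Suppose t_i = 1 and s_1,…,s_{n−2} are algebraically independent over ℂ.
If P = (s_1−μ_1, …, s_{n−2}−μ_{n−2}) is prime then P is a Poisson prime ideal, and the
variety X = {p : s_i(p) = μ_i ∀i} is nonsingular iff A/P is Poisson simple.  (Poisson
ideals of A/P correspond to Poisson ideals of A containing P, so Poisson simplicity of
A/P says: the only Poisson ideals of A containing P are P and A.) -/

noncomputable section
open MvPolynomial

/-- The polynomial algebra `A = ℂ[x_1,…,x_{m+2}]`. -/
abbrev PA (m : ℕ) : Type := MvPolynomial (Fin (m + 2)) ℂ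

/-- The rational function field `B = ℂ(x_1,…,x_{m+2})`. -/
abbrev FB (m : ℕ) : Type := FractionRing (PA m)

/-- The rows of the matrix computing the Poisson bracket on `A`: ∇f, ∇g and, for
each `i`, `t_i²∇(s_i/t_i) = t_i∇s_i − s_i∇t_i`. -/
def pbrRows {m : ℕ} (s t : Fin m → PA m) (f g : PA m) :
    Fin (m + 2) → Fin (m + 2) → PA m :=
  Fin.cons (fun j => pderiv j f)
    (Fin.cons (fun j => pderiv j g)
      (fun k => fun j => t k * pderiv j (s k) - s k * pderiv j (t k)))

/-- The Poisson bracket `{f,g} = (t_1⋯t_m)²·Jac(f,g,s_1/t_1,…,s_m/t_m)` restricted to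
the polynomial algebra `A`. -/
def pbr {m : ℕ} (s t : Fin m → PA m) (f g : PA m) : PA m :=
  Matrix.det (Matrix.of (pbrRows s t f g))

/-!
Let `p` be a point of `X`, with maximal ideal `𝔪`. The bracket `{f, g}` takes the value
`det (∇f(p), ∇g(p), ∇s_1(p), …, ∇s_m(p))` at `p`.

If the `∇s_i(p)` are dependent, then every bracket vanishes at `p`, so `𝔪` is a Poisson ideal
containing `P`; it differs from `P` because `m` polynomials have too few gradients at `p` to
generate the maximal ideal of a point in dimension `m + 2`.

If they are independent, choose `y, z ∈ 𝔪` whose gradients complete them to a basis. Then `y, z`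
generate `𝔪` modulo `P + 𝔪²`, and up to the nonzero scalar `c = {y, z}(p)` the derivations `{·, z}`
and `-{·, y}` are dual to them. The Euler derivation `E = c⁻¹ (y {·, z} - z {·, y})` therefore acts
on `𝔪ᵏ / 𝔪ᵏ⁺¹`, taken in `A / P`, as multiplication by `k`, while it sends a Poisson ideal contained
in `𝔪ᵏ` into `𝔪ᵏ⁺¹`. In characteristic zero such an ideal, once contained in `𝔪`, lies in every
power of `𝔪`, hence vanishes by Krull's intersection theorem. The Nullstellensatz puts every proper
ideal containing `P` inside such an `𝔪`.
-/

section EulerDerivation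

variable {R A : Type*} [CommRing R] [CommRing A] [Algebra R A] {M : Ideal A}
  {E : Derivation R A A}

theorem sum_smul_derivation_apply {ι : Type*} [Fintype ι] (y : ι → A) (D : ι → Derivation R A A)
    (v : A) : (∑ i, y i • D i) v = ∑ i, y i * D i v := by
  rw [← Derivation.coeFnAddMonoidHom_apply, map_sum, Finset.sum_apply]
  rfl

theorem derivation_mem_sq (hE : ∀ v, E v ∈ M) {v : A} (hv : v ∈ M ^ 2) : E v ∈ M ^ 2 := by
  rw [pow_two] at hv ⊢
  induction hv using Submodule.mul_induction_on' with
  | mem_mul_mem v hv w hw =>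
    rw [Derivation.leibniz]
    exact Ideal.add_mem _ (Ideal.mul_mem_mul hv (hE w)) (Ideal.mul_mem_mul hw (hE v))
  | add v _ w _ hv hw =>
    rw [map_add]
    exact Ideal.add_mem _ hv hw

theorem derivation_sub_mem_sq_of_le_span_sup_sq {S : Set A} (hE : ∀ v, E v ∈ M) (hSM : S ⊆ M)
    (hMS : M ≤ Ideal.span S ⊔ M ^ 2) (hES : ∀ y ∈ S, E y - y ∈ M ^ 2) {v : A} (hv : v ∈ M) :
    E v - v ∈ M ^ 2 := by
  have hspan : ∀ a ∈ Ideal.span S, E a - a ∈ M ^ 2 := by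
    intro a ha
    induction ha using Submodule.span_induction with
    | mem y hy => exact hES y hy
    | zero => simp
    | add x y _ _ hx hy =>
      rw [map_add, add_sub_add_comm]
      exact Ideal.add_mem _ hx hy
    | smul c y hy ih =>
      have leibniz : E (c * y) - c * y = c * (E y - y) + y * E c := by
        rw [Derivation.leibniz, smul_eq_mul, smul_eq_mul]
        ring
      rw [smul_eq_mul, leibniz]
      refine Ideal.add_mem _ (Ideal.mul_mem_left _ c ih) ?_
      rw [pow_two]
      exact Ideal.mul_mem_mul (Ideal.span_le.2 hSM hy) (hE c)
  obtain ⟨a, ha, b, hb, rfl⟩ := Submodule.mem_sup.1 (hMS hv)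
  rw [map_add, add_sub_add_comm]
  exact Ideal.add_mem _ (hspan a ha) (Ideal.sub_mem _ (derivation_mem_sq hE hb) hb)

theorem derivation_sub_natCast_mul_mem_pow_succ (hE₀ : ∀ v, E v ∈ M)
    (hE₁ : ∀ v ∈ M, E v - v ∈ M ^ 2) {k : ℕ} {v : A} (hv : v ∈ M ^ k) :
    E v - k * v ∈ M ^ (k + 1) := by
  induction hv using Submodule.pow_induction_on_left' with
  | algebraMap r => simpa using hE₀ r
  | add x y i _ _ hx hy =>
    rw [map_add, mul_add, add_sub_add_comm]
    exact Ideal.add_mem _ hx hy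
  | mem_mul v hv k w hw ih =>
    have leibniz : E (v * w) - (k + 1 : ℕ) * (v * w) = v * (E w - k * w) + (E v - v) * w := by
      rw [Derivation.leibniz, smul_eq_mul, smul_eq_mul]
      push_cast
      ring
    rw [leibniz]
    refine Ideal.add_mem _ ?_ ?_
    · rw [pow_succ' M (k + 1)]
      exact Ideal.mul_mem_mul hv ih
    · rw [Nat.succ_eq_add_one, add_assoc, add_comm k, pow_add]
      exact Ideal.mul_mem_mul (hE₁ v hv) hw

theorem mem_pow_succ_of_derivation_mem_pow_succ [Algebra ℚ A] (hE₀ : ∀ v, E v ∈ M)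
    (hE₁ : ∀ v ∈ M, E v - v ∈ M ^ 2) {k : ℕ} (hk : k ≠ 0) {v : A} (hv : v ∈ M ^ k)
    (hEv : E v ∈ M ^ (k + 1)) : v ∈ M ^ (k + 1) := by
  have hkv : k * v ∈ M ^ (k + 1) := by
    simpa using Ideal.sub_mem _ hEv (derivation_sub_natCast_mul_mem_pow_succ hE₀ hE₁ hv)
  have hunit : IsUnit (k : A) := by
    simpa using (Nat.cast_ne_zero (R := ℚ).2 hk).isUnit.map (algebraMap ℚ A)
  exact (Ideal.unit_mul_mem_iff_mem _ hunit).1 hkv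

end EulerDerivation

section DualDerivations

variable {R A ι : Type*} [CommRing R] [CommRing A] [Algebra R A] [Algebra ℚ A]
  [IsNoetherianRing A] [Finite ι] [DecidableEq ι] {M P J : Ideal A} {y : ι → A}
  {D : ι → Derivation R A A}

theorem eq_bot_of_dual_derivations [IsDomain A] (hM : M ≠ ⊤) (hy : ∀ i, y i ∈ M)
    (hMy : M ≤ Ideal.span (Set.range y) ⊔ M ^ 2)
    (hDy : ∀ i j, D i (y j) - (Pi.single i 1 : ι → A) j ∈ M)
    (hDJ : ∀ i, ∀ u ∈ J, D i u ∈ J) (hJM : J ≤ M) : J = ⊥ := by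
  have := Fintype.ofFinite ι
  let E : Derivation R A A := ∑ i, y i • D i
  have hE₀ (v : A) : E v ∈ M := by
    rw [sum_smul_derivation_apply]
    exact Ideal.sum_mem _ fun i _ => Ideal.mul_mem_right _ _ (hy i)
  have hEy : ∀ x ∈ Set.range y, E x - x ∈ M ^ 2 := by
    rintro _ ⟨j, rfl⟩
    have expand : E (y j) - y j = ∑ i, y i * (D i (y j) - (Pi.single i 1 : ι → A) j) := by
      simp [E, sum_smul_derivation_apply, mul_sub, Pi.single_apply]
    rw [expand, pow_two]
    exact Ideal.sum_mem _ fun i _ => Ideal.mul_mem_mul (hy i) (hDy i j)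
  have hE₁ (v : A) (hv : v ∈ M) : E v - v ∈ M ^ 2 :=
    derivation_sub_mem_sq_of_le_span_sup_sq hE₀ (Set.range_subset_iff.2 hy) hMy hEy hv
  have hJpow (k : ℕ) : J ≤ M ^ (k + 1) := by
    induction k with
    | zero => simpa using hJM
    | succ k ih =>
      intro u hu
      refine mem_pow_succ_of_derivation_mem_pow_succ hE₀ hE₁ k.succ_ne_zero (ih hu) ?_
      rw [sum_smul_derivation_apply, pow_succ']
      exact Ideal.sum_mem _ fun i _ => Ideal.mul_mem_mul (hy i) (ih (hDJ i u hu))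
  rw [eq_bot_iff, ← M.iInf_pow_eq_bot_of_isDomain hM]
  exact le_iInf fun k => (hJpow k).trans (Ideal.pow_le_pow_right k.le_succ)

theorem le_of_dual_derivations [P.IsPrime] (hM : M ≠ ⊤) (hPM : P ≤ M) (hy : ∀ i, y i ∈ M)
    (hMy : M ≤ Ideal.span (Set.range y) ⊔ P ⊔ M ^ 2)
    (hDy : ∀ i j, D i (y j) - (Pi.single i 1 : ι → A) j ∈ M)
    (hDP : ∀ i, ∀ u ∈ P, D i u ∈ P) (hDJ : ∀ i, ∀ u ∈ J, D i u ∈ J) (hJM : J ≤ M) : J ≤ P := by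
  let π : A →ₐ[R] A ⧸ P := Ideal.Quotient.mkₐ R P
  have hπ : Function.Surjective π := Ideal.Quotient.mkₐ_surjective R P
  have hπP {u : A} : π u = 0 ↔ u ∈ P := Ideal.Quotient.eq_zero_iff_mem
  let D' (i : ι) : Derivation R (A ⧸ P) (A ⧸ P) :=
    Derivation.liftOfSurjective hπ (d := D i) fun u hu => hπP.2 (hDP i u (hπP.1 hu))
  have hD' (i : ι) (u : A) : D' i (π u) = π (D i u) := Derivation.liftOfSurjective_apply hπ _ u
  have hM' : M.map π ≠ ⊤ := by
    rw [Ideal.ne_top_iff_one] at hM ⊢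
    exact fun h => hM ((Ideal.mem_quotient_iff_mem hPM).1 h)
  have hmap : J.map π = ⊥ := by
    refine eq_bot_of_dual_derivations (M := M.map π) (y := π ∘ y) (D := D') hM'
      (fun i => Ideal.mem_map_of_mem π (hy i)) ?_ (fun i j => ?_) (fun i => ?_)
      (Ideal.map_mono hJM)
    · have hPπ : P.map π = ⊥ := P.map_quotient_self
      simpa [Ideal.map_sup, Ideal.map_pow, Ideal.map_span, hPπ, Set.range_comp]
        using Ideal.map_mono (f := π) hMy
    · have := Ideal.mem_map_of_mem π (hDy i j)
      simpa [hD', Pi.single_apply, apply_ite π] using this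
    · intro v hv
      obtain ⟨u, hu, rfl⟩ := (Ideal.mem_map_iff_of_surjective π hπ).1 hv
      rw [hD']
      exact Ideal.mem_map_of_mem π (hDJ i u hu)
  exact fun u hu => hπP.1 (by simpa [hmap] using Ideal.mem_map_of_mem π hu)

end DualDerivations

section Gradient

variable {R σ : Type*} [CommRing R]

/-- The gradient `∇f = (∂f/∂x_j)_j`, as a derivation into the module `A^σ`, where
`A = R[x_j : j ∈ σ]`. -/
def grad : Derivation R (MvPolynomial σ R) (σ → MvPolynomial σ R) :=
  Derivation.mk' (LinearMap.pi fun j => (pderiv j).toLinearMap) fun f g => by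
    ext j
    simp [Derivation.leibniz]

@[simp]
theorem grad_apply (f : MvPolynomial σ R) (j : σ) : grad f j = pderiv j f := rfl

/-- The value `(∇f)(p)` of the gradient at a point, as a linear map. On the maximal ideal
`𝔪` of `p` it induces, for finite `σ`, the isomorphism of `𝔪 / 𝔪²` with `R^σ`. -/
def gradAt (p : σ → R) : MvPolynomial σ R →ₗ[R] σ → R :=
  LinearMap.pi fun j => (aeval p).toLinearMap ∘ₗ (pderiv j).toLinearMap

theorem gradAt_apply (p : σ → R) (f : MvPolynomial σ R) (j : σ) :
    gradAt p f j = eval p (pderiv j f) := by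
  simp [gradAt, aeval_eq_eval]

variable {p : σ → R}

theorem gradAt_mul (f g : MvPolynomial σ R) :
    gradAt p (f * g) = eval p f • gradAt p g + eval p g • gradAt p f := by
  ext j
  simp [gradAt_apply, Derivation.leibniz]

@[simp]
theorem gradAt_C (c : R) : gradAt p (C c) = 0 := by
  ext j
  simp [gradAt_apply]

@[simp]
theorem gradAt_X [DecidableEq σ] (i : σ) : gradAt p (X i) = Pi.single i 1 := by
  ext j
  obtain rfl | hij := eq_or_ne j i
  · simp [gradAt_apply]
  · simp [gradAt_apply, pderiv_X_of_ne hij.symm, hij]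

theorem exists_eval_eq_zero_gradAt_eq [Finite σ] (p a : σ → R) :
    ∃ f : MvPolynomial σ R, eval p f = 0 ∧ gradAt p f = a := by
  classical
  have := Fintype.ofFinite σ
  refine ⟨∑ j, a j • (X j - C (p j)), by simp, ?_⟩
  simpa using (pi_eq_sum_univ' a).symm

theorem sub_taylor_mem_ker_eval_sq [Fintype σ] (p : σ → R) (f : MvPolynomial σ R) :
    f - C (eval p f) - ∑ j, C (gradAt p f j) * (X j - C (p j)) ∈ RingHom.ker (eval p) ^ 2 := by
  classical
  induction f using MvPolynomial.induction_on with
  | C a => simp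
  | add f g hf hg =>
    convert Ideal.add_mem _ hf hg using 1
    simp only [map_add, Pi.add_apply, add_mul, Finset.sum_add_distrib]
    ring
  | mul_X f i hf =>
    have hprod : (f - C (eval p f)) * (X i - C (p i)) ∈ RingHom.ker (eval p) ^ 2 := by
      rw [pow_two]
      apply Ideal.mul_mem_mul <;> simp [RingHom.mem_ker]
    convert Ideal.add_mem _ hprod (Ideal.mul_mem_left _ (C (p i)) hf) using 1
    have hsum : ∑ j, C (gradAt p (f * X i) j) * (X j - C (p j)) =
        C (eval p f) * (X i - C (p i)) + C (p i) * ∑ j, C (gradAt p f j) * (X j - C (p j)) := by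
      simp [gradAt_mul, Pi.single_apply, apply_ite C, add_mul, Finset.sum_add_distrib,
        Finset.mul_sum, mul_assoc]
    rw [hsum, map_mul, map_mul, eval_X]
    ring

theorem mem_ker_eval_sq_of_gradAt_eq_zero [Finite σ] {f : MvPolynomial σ R}
    (hf : eval p f = 0) (hgrad : gradAt p f = 0) : f ∈ RingHom.ker (eval p) ^ 2 := by
  have := Fintype.ofFinite σ
  simpa [hf, hgrad] using sub_taylor_mem_ker_eval_sq p f

variable {ι : Type*} {f : ι → MvPolynomial σ R}

theorem ker_eval_le_span_sup_sq [Finite σ] (hf : ∀ i, eval p (f i) = 0)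
    (hspan : Submodule.span R (Set.range (gradAt p ∘ f)) = ⊤) :
    RingHom.ker (eval p) ≤ Ideal.span (Set.range f) ⊔ RingHom.ker (eval p) ^ 2 := by
  intro v hv
  have hgrad : gradAt p v ∈ (Submodule.span R (Set.range f)).map (gradAt p) := by
    rw [Submodule.map_span, ← Set.range_comp, hspan]
    exact Submodule.mem_top
  obtain ⟨w, hw, hwv⟩ := hgrad
  have hwI : w ∈ Ideal.span (Set.range f) := Submodule.span_subset_span R _ _ hw
  have hwM : w ∈ RingHom.ker (eval p) := Ideal.span_le.2 (Set.range_subset_iff.2 hf) hwI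
  rw [← add_sub_cancel w v]
  exact Submodule.add_mem_sup hwI
    (mem_ker_eval_sq_of_gradAt_eq_zero (Ideal.sub_mem _ hv hwM) (by rw [map_sub, hwv, sub_self]))

theorem gradAt_mem_span_of_mem_span (hf : ∀ i, eval p (f i) = 0) {u : MvPolynomial σ R}
    (hu : u ∈ Ideal.span (Set.range f)) :
    gradAt p u ∈ Submodule.span R (Set.range (gradAt p ∘ f)) := by
  induction hu using Submodule.span_induction with
  | mem x hx =>
    obtain ⟨i, rfl⟩ := hx
    exact Submodule.subset_span ⟨i, rfl⟩
  | zero => simp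
  | add x y _ _ hx hy =>
    rw [map_add]
    exact Submodule.add_mem _ hx hy
  | smul a x hx ih =>
    have hspan : Ideal.span (Set.range f) ≤ RingHom.ker (eval p) :=
      Ideal.span_le.2 (Set.range_subset_iff.2 hf)
    have hx0 : eval p x = 0 := hspan hx
    rw [smul_eq_mul, gradAt_mul, hx0, zero_smul, add_zero]
    exact Submodule.smul_mem _ _ ih

theorem card_le_card_of_ker_eval_eq_span [Nontrivial R] [Fintype σ] [Fintype ι]
    (h : RingHom.ker (eval p) = Ideal.span (Set.range f)) :
    Fintype.card σ ≤ Fintype.card ι := by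
  have hf (i : ι) : eval p (f i) = 0 := by
    rw [← RingHom.mem_ker, h]
    exact Ideal.subset_span ⟨i, rfl⟩
  have htop : Submodule.span R (Set.range (gradAt p ∘ f)) = ⊤ := by
    refine eq_top_iff.2 fun a _ => ?_
    obtain ⟨u, hu, rfl⟩ := exists_eval_eq_zero_gradAt_eq p a
    exact gradAt_mem_span_of_mem_span hf (h ▸ hu)
  have hcard := finrank_range_le_card (R := R) (gradAt p ∘ f)
  rwa [Set.finrank, htop, finrank_top, Module.finrank_fintype_fun_eq_card] at hcard

end Gradient

section JacobianBracket

variable {R : Type*} [CommRing R] {m : ℕ} (s : Fin m → MvPolynomial (Fin (m + 2)) R)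

/-- The Jacobian Poisson bracket `{f, g} = Jac(f, g, s_1, …, s_m)` on `R[x_1, …, x_{m+2}]`. -/
def jacobianBracket (f g : MvPolynomial (Fin (m + 2)) R) : MvPolynomial (Fin (m + 2)) R :=
  Matrix.det (Matrix.of (Matrix.vecCons (grad f) (Matrix.vecCons (grad g) (grad ∘ s))))

/-- Poisson ideals of the Jacobian bracket: ideals stable under `{·, r}` for every `r`. -/
def IsPoissonIdeal (J : Ideal (MvPolynomial (Fin (m + 2)) R)) : Prop :=
  ∀ u ∈ J, ∀ r, jacobianBracket s u r ∈ J

/-- The ideal `(s_1 - μ_1, …, s_m - μ_m)` of the fibre of `s` over `μ`. -/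
def fiberIdeal (μ : Fin m → R) : Ideal (MvPolynomial (Fin (m + 2)) R) :=
  Ideal.span (Set.range fun i => s i - C (μ i))

/-- The Hamiltonian derivation `{·, g}` of `g`: the gradient followed by the Jacobian determinant as
a linear function of its first row, whose entry `0` in `vecCons` is a placeholder. -/
def hamiltonian (g : MvPolynomial (Fin (m + 2)) R) :
    Derivation R (MvPolynomial (Fin (m + 2)) R) (MvPolynomial (Fin (m + 2)) R) :=
  (Matrix.detRowAlternating.toMultilinearMap.toLinearMap
    (Matrix.vecCons 0 (Matrix.vecCons (grad g) (grad ∘ s))) 0).compDer grad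

@[simp]
theorem hamiltonian_apply (f g : MvPolynomial (Fin (m + 2)) R) :
    hamiltonian s g f = jacobianBracket s f g := by
  change Matrix.det (Function.update _ 0 (grad f)) = _
  rw [Matrix.vecCons, Fin.update_cons_zero]
  rfl

theorem jacobianBracket_self (f : MvPolynomial (Fin (m + 2)) R) : jacobianBracket s f f = 0 :=
  Matrix.det_zero_of_row_eq Fin.zero_ne_one rfl

theorem jacobianBracket_swap (f g : MvPolynomial (Fin (m + 2)) R) :
    jacobianBracket s g f = -jacobianBracket s f g := by
  have hrows : Matrix.of (Matrix.vecCons (grad g) (Matrix.vecCons (grad f) (grad ∘ s))) =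
      (Matrix.of (Matrix.vecCons (grad f) (Matrix.vecCons (grad g) (grad ∘ s)))).submatrix
        (Equiv.swap 0 1) id := by
    ext k
    refine Fin.cases ?_ (Fin.cases ?_ fun k => ?_) k
    · simp
    · simp
    · simp [Equiv.swap_apply_of_ne_of_ne, Fin.ext_iff]
  rw [jacobianBracket, hrows, Matrix.det_permute]
  simp [jacobianBracket]

theorem jacobianBracket_casimir (i : Fin m) (g : MvPolynomial (Fin (m + 2)) R) :
    jacobianBracket s (s i) g = 0 :=
  Matrix.det_zero_of_row_eq (Fin.succ_ne_zero i.succ).symm rfl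

theorem isPoissonIdeal_fiberIdeal (μ : Fin m → R) : IsPoissonIdeal s (fiberIdeal s μ) := by
  intro u hu r
  rw [← hamiltonian_apply]
  induction hu using Submodule.span_induction with
  | mem x hx =>
    obtain ⟨i, rfl⟩ := hx
    rw [map_sub, hamiltonian_apply, jacobianBracket_casimir, ← algebraMap_eq,
      Derivation.map_algebraMap, sub_zero]
    exact Ideal.zero_mem _
  | zero =>
    rw [map_zero]
    exact Ideal.zero_mem _
  | add x y _ _ hx hy =>
    rw [map_add]
    exact Ideal.add_mem _ hx hy
  | smul a x hx ih =>
    rw [smul_eq_mul, Derivation.leibniz]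
    exact Ideal.add_mem _ (Ideal.mul_mem_left _ _ ih) (Ideal.mul_mem_right _ _ hx)

variable {s}

theorem IsPoissonIdeal.smul_hamiltonian_mem {J : Ideal (MvPolynomial (Fin (m + 2)) R)}
    (hJ : IsPoissonIdeal s J) (c : R) (g : MvPolynomial (Fin (m + 2)) R)
    {u : MvPolynomial (Fin (m + 2)) R} (hu : u ∈ J) : (c • hamiltonian s g) u ∈ J := by
  rw [Derivation.smul_apply, hamiltonian_apply]
  exact Submodule.smul_of_tower_mem J c (hJ u hu g)

theorem fiberIdeal_le_iff {μ : Fin m → R} {J : Ideal (MvPolynomial (Fin (m + 2)) R)} :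
    fiberIdeal s μ ≤ J ↔ ∀ i, s i - C (μ i) ∈ J := by
  rw [fiberIdeal, Ideal.span_le, Set.range_subset_iff]
  rfl

theorem fiberIdeal_le_ker_eval_iff {μ : Fin m → R} {p : Fin (m + 2) → R} :
    fiberIdeal s μ ≤ RingHom.ker (eval p) ↔ ∀ i, eval p (s i) = μ i := by
  simp [fiberIdeal_le_iff, RingHom.mem_ker, sub_eq_zero]

theorem eval_jacobianBracket (p : Fin (m + 2) → R) (f g : MvPolynomial (Fin (m + 2)) R) :
    eval p (jacobianBracket s f g) = Matrix.det (Matrix.of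
      (Matrix.vecCons (gradAt p f) (Matrix.vecCons (gradAt p g) (gradAt p ∘ s)))) := by
  rw [jacobianBracket, RingHom.map_det]
  congr 1
  ext i j
  refine Fin.cases ?_ (Fin.cases ?_ fun i => ?_) i <;> simp [gradAt_apply]

end JacobianBracket

section Field

variable {K : Type*} [Field K] {m : ℕ} {s : Fin m → MvPolynomial (Fin (m + 2)) K} {μ : Fin m → K}
  {p : Fin (m + 2) → K}

theorem rank_eq_card_iff_linearIndependent_row {ι κ : Type*} [Fintype ι] [Fintype κ]
    (N : Matrix ι κ K) : N.rank = Fintype.card ι ↔ LinearIndependent K N.row := by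
  rw [linearIndependent_iff_card_eq_finrank_span, Set.finrank, Matrix.rank_eq_finrank_span_row,
    eq_comm]

theorem rank_jacobian_eq_iff_linearIndependent_gradAt :
    (Matrix.of fun i j => eval p (pderiv j (s i))).rank = m ↔
      LinearIndependent K (gradAt p ∘ s) := by
  have hrow : (Matrix.of fun i j => eval p (pderiv j (s i))).row = gradAt p ∘ s := by
    ext i j
    exact (gradAt_apply p (s i) j).symm
  rw [← hrow, ← rank_eq_card_iff_linearIndependent_row, Fintype.card_fin]

theorem eval_jacobianBracket_ne_zero_iff {f g : MvPolynomial (Fin (m + 2)) K} :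
    eval p (jacobianBracket s f g) ≠ 0 ↔ LinearIndependent K
      (Matrix.vecCons (gradAt p f) (Matrix.vecCons (gradAt p g) (gradAt p ∘ s))) := by
  rw [eval_jacobianBracket, ← isUnit_iff_ne_zero, ← Matrix.isUnit_iff_isUnit_det,
    ← Matrix.linearIndependent_rows_iff_isUnit]
  rfl

theorem isPoissonIdeal_ker_eval_of_not_linearIndependent
    (h : ¬LinearIndependent K (gradAt p ∘ s)) :
    IsPoissonIdeal s (RingHom.ker (eval p)) := by
  intro u _ r
  rw [RingHom.mem_ker]
  contrapose! h
  have hrows := eval_jacobianBracket_ne_zero_iff.1 h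
  exact (linearIndependent_finCons.1 (linearIndependent_finCons.1 hrows).1).1

theorem exists_transversal_pair (h : LinearIndependent K (gradAt p ∘ s)) :
    ∃ y z, eval p y = 0 ∧ eval p z = 0 ∧ eval p (jacobianBracket s y z) ≠ 0 := by
  obtain ⟨b, hb⟩ := exists_linearIndependent_cons_of_lt_finrank h (by simp)
  obtain ⟨a, ha⟩ := exists_linearIndependent_cons_of_lt_finrank hb (by simp)
  obtain ⟨y, hy, rfl⟩ := exists_eval_eq_zero_gradAt_eq p a
  obtain ⟨z, hz, rfl⟩ := exists_eval_eq_zero_gradAt_eq p b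
  exact ⟨y, z, hy, hz, eval_jacobianBracket_ne_zero_iff.2 ha⟩

theorem ker_eval_le_span_pair_sup_fiberIdeal_sup_sq (hp : ∀ i, eval p (s i) = μ i)
    {y z : MvPolynomial (Fin (m + 2)) K} (hy : eval p y = 0) (hz : eval p z = 0)
    (hyz : eval p (jacobianBracket s y z) ≠ 0) :
    RingHom.ker (eval p) ≤
      Ideal.span (Set.range ![y, z]) ⊔ fiberIdeal s μ ⊔ RingHom.ker (eval p) ^ 2 := by
  let f := Matrix.vecCons y (Matrix.vecCons z fun i => s i - C (μ i))
  have hgrad : gradAt p ∘ f =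
      Matrix.vecCons (gradAt p y) (Matrix.vecCons (gradAt p z) (gradAt p ∘ s)) := by
    funext i
    refine Fin.cases ?_ (Fin.cases ?_ fun i => ?_) i <;> simp [f]
  have hspan : Submodule.span K (Set.range (gradAt p ∘ f)) = ⊤ := by
    rw [hgrad]
    exact (eval_jacobianBracket_ne_zero_iff.1 hyz).span_eq_top_of_card_eq_finrank (by simp)
  have hf (i : Fin (m + 2)) : eval p (f i) = 0 := by
    refine Fin.cases ?_ (Fin.cases ?_ fun i => ?_) i <;> simp [f, hy, hz, hp]
  have hspanf : Ideal.span (Set.range f) ≤ Ideal.span (Set.range ![y, z]) ⊔ fiberIdeal s μ := by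
    simp [f, fiberIdeal, Ideal.span_insert, sup_assoc]
  exact (ker_eval_le_span_sup_sq hf hspan).trans (sup_le_sup_right hspanf _)

theorem IsPoissonIdeal.le_fiberIdeal [CharZero K] {J : Ideal (MvPolynomial (Fin (m + 2)) K)}
    (hJ : IsPoissonIdeal s J) (hprime : (fiberIdeal s μ).IsPrime)
    (hp : ∀ i, eval p (s i) = μ i) (hind : LinearIndependent K (gradAt p ∘ s))
    (hJp : J ≤ RingHom.ker (eval p)) : J ≤ fiberIdeal s μ := by
  obtain ⟨y, z, hy, hz, hyz⟩ := exists_transversal_pair hind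
  set c := eval p (jacobianBracket s y z) with hc
  let D := ![c⁻¹ • hamiltonian s z, -c⁻¹ • hamiltonian s y]
  have hD {I} (hI : IsPoissonIdeal s I) : ∀ i, ∀ u ∈ I, D i u ∈ I :=
    Fin.forall_fin_two.2 ⟨fun u hu => hI.smul_hamiltonian_mem c⁻¹ z hu,
      fun u hu => hI.smul_hamiltonian_mem (-c⁻¹) y hu⟩
  refine le_of_dual_derivations (y := ![y, z]) (D := D) (RingHom.ker_ne_top _)
    (fiberIdeal_le_ker_eval_iff.2 hp) ?_
    (ker_eval_le_span_pair_sup_fiberIdeal_sup_sq hp hy hz hyz) ?_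
    (hD (isPoissonIdeal_fiberIdeal s μ)) (hD hJ) hJp
  · simp [Fin.forall_fin_two, RingHom.mem_ker, hy, hz]
  · simp [Fin.forall_fin_two, RingHom.mem_ker, D, jacobianBracket_self, jacobianBracket_swap s y z,
      smul_eval, ← hc, inv_mul_cancel₀ hyz]

theorem linearIndependent_gradAt_of_forall_isPoissonIdeal
    (hsimple : ∀ J, fiberIdeal s μ ≤ J → IsPoissonIdeal s J → J = fiberIdeal s μ ∨ J = ⊤)
    (hp : ∀ i, eval p (s i) = μ i) : LinearIndependent K (gradAt p ∘ s) := by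
  by_contra hdep
  have hker := isPoissonIdeal_ker_eval_of_not_linearIndependent hdep
  rcases hsimple _ (fiberIdeal_le_ker_eval_iff.2 hp) hker with h | h
  · simpa using card_le_card_of_ker_eval_eq_span h
  · exact RingHom.ker_ne_top _ h

theorem exists_le_ker_eval [IsAlgClosed K] {σ : Type*} [Finite σ] {J : Ideal (MvPolynomial σ K)}
    (hJ : J ≠ ⊤) : ∃ p : σ → K, J ≤ RingHom.ker (eval p) := by
  obtain ⟨I, hI, hJI⟩ := Ideal.exists_le_maximal J hJ
  obtain ⟨p, rfl⟩ := isMaximal_iff_eq_vanishingIdeal_singleton.1 hI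
  refine ⟨p, fun f hf => ?_⟩
  simpa [aeval_eq_eval] using hJI hf

theorem statement_19_general [IsAlgClosed K] [CharZero K] (hprime : (fiberIdeal s μ).IsPrime) :
    IsPoissonIdeal s (fiberIdeal s μ) ∧
      ((∀ p : Fin (m + 2) → K, (∀ i, eval p (s i) = μ i) →
          (Matrix.of fun i j => eval p (pderiv j (s i))).rank = m) ↔
        ∀ J, fiberIdeal s μ ≤ J → IsPoissonIdeal s J → J = fiberIdeal s μ ∨ J = ⊤) := by
  simp only [rank_jacobian_eq_iff_linearIndependent_gradAt]
  refine ⟨isPoissonIdeal_fiberIdeal s μ, fun hns J hPJ hJ => ?_, fun hsimple p hp =>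
    linearIndependent_gradAt_of_forall_isPoissonIdeal hsimple hp⟩
  refine or_iff_not_imp_right.2 fun hJtop => le_antisymm ?_ hPJ
  obtain ⟨p, hJp⟩ := exists_le_ker_eval hJtop
  have hp := fiberIdeal_le_ker_eval_iff.1 (hPJ.trans hJp)
  exact hJ.le_fiberIdeal hprime hp (hns p hp) hJp

end Field

theorem pbr_one_eq_jacobianBracket {m : ℕ} (s : Fin m → PA m) (f g : PA m) :
    pbr s (fun _ => 1) f g = jacobianBracket s f g := by
  rw [pbr, jacobianBracket]
  congr 1
  ext i j
  refine Fin.cases ?_ (Fin.cases ?_ fun i => ?_) i <;> simp [pbrRows]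

theorem statement_19 {m : ℕ} (hm : 1 ≤ m)
    (s : Fin m → PA m)
    (hind : AlgebraicIndependent ℂ s)
    (μ : Fin m → ℂ)
    (P : Ideal (PA m)) (hP : P = Ideal.span (Set.range fun i => s i - C (μ i)))
    (hPprime : P.IsPrime) :
    -- P is a Poisson (prime) ideal
    (∀ u ∈ P, ∀ r : PA m, pbr s (fun _ => 1) u r ∈ P) ∧
    -- X is nonsingular iff A/P is Poisson simple
    ((∀ p : Fin (m + 2) → ℂ, (∀ i, eval p (s i) = μ i) →
        Matrix.rank (Matrix.of fun i j => eval p (pderiv j (s i))) = m) ↔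
     (∀ J : Ideal (PA m), P ≤ J →
        (∀ u ∈ J, ∀ r : PA m, pbr s (fun _ => 1) u r ∈ J) → J = P ∨ J = ⊤)) := by
  subst hP
  simp only [pbr_one_eq_jacobianBracket]
  exact statement_19_general hPprime

end
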